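/- arXiv:1706.10174 — 5 statements merged into one kernel-verified Lean document; each statement's English description precedes it below -/
import Mathlib

section
/- A pair (p, q) with p ∈ ℝ and q ∈ ℝ³ is realizable, i.e. there exists a finite nonnegative Borel measure μ on the unit sphere S² ⊂ ℝ³ with μ(S²) = p and ∫_{S²} Ω dμ(Ω) = q, if and only if p ≥ 0 and ‖q‖ ≤ p. -/
open MeasureTheory

/-!
The sphere lies in the closed unit ball, so the first moment of a measure is bounded in norm by its
mass. Conversely, write `q = ‖q‖ • u` with `u` a unit vector: masses `(p + ‖q‖) / 2` at `u` and
`(p - ‖q‖) / 2` at `-u` add up to `p` and have first moment `q`.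
-/

open Metric
open scoped NNReal

theorem exists_sphere_norm_smul_eq {E : Type*} [NormedAddCommGroup E] [NormedSpace ℝ E]
    [Nontrivial E] (q : E) : ∃ u : sphere (0 : E) 1, ‖q‖ • (u : E) = q := by
  rcases eq_or_ne q 0 with rfl | hq
  · obtain ⟨u, hu⟩ := (NormedSpace.sphere_nonempty (x := (0 : E))).2 zero_le_one
    exact ⟨⟨u, hu⟩, by simp⟩
  · have norm_ne_zero : ‖q‖ ≠ 0 := norm_ne_zero_iff.2 hq
    exact ⟨⟨‖q‖⁻¹ • q, by simp [norm_smul, norm_ne_zero]⟩, smul_inv_smul₀ norm_ne_zero q⟩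

section Moments

variable {E : Type*} [NormedAddCommGroup E] [MeasurableSpace E] {r : ℝ}

theorem norm_integral_sphere_le [NormedSpace ℝ E] (μ : Measure (sphere (0 : E) r))
    [IsFiniteMeasure μ] : ‖∫ Ω, (Ω : E) ∂μ‖ ≤ r * μ.real Set.univ :=
  norm_integral_le_of_norm_le_const (.of_forall fun Ω => (norm_eq_of_mem_sphere Ω).le)

/-- The measure on a sphere centred at the origin with point masses `a` at `u` and `b` at `-u`. It
realizes every first moment in the direction of `u` that its mass allows. The weights are in `ℝ≥0`,
so that the measure is finite. -/
noncomputable def antipodalMeasure (a b : ℝ≥0) (u : sphere (0 : E) r) :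
    Measure (sphere (0 : E) r) :=
  a • Measure.dirac u + b • Measure.dirac (-u)

instance isFiniteMeasure_antipodalMeasure (a b : ℝ≥0) (u : sphere (0 : E) r) :
    IsFiniteMeasure (antipodalMeasure a b u) :=
  inferInstanceAs (IsFiniteMeasure (a • Measure.dirac u + b • Measure.dirac (-u)))

theorem antipodalMeasure_real_univ (a b : ℝ≥0) (u : sphere (0 : E) r) :
    (antipodalMeasure a b u).real Set.univ = a + b := by
  simp [antipodalMeasure, measureReal_add_apply, measureReal_nnreal_smul_apply]

theorem integral_antipodalMeasure [NormedSpace ℝ E] [CompleteSpace E]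
    [MeasurableSingletonClass E] (a b : ℝ≥0) (u : sphere (0 : E) r) :
    ∫ Ω, (Ω : E) ∂antipodalMeasure a b u = ((a : ℝ) - b) • (u : E) := by
  have integrable_smul_dirac (c : ℝ≥0) (v : sphere (0 : E) r) :
      Integrable (fun Ω : sphere (0 : E) r => (Ω : E)) (c • Measure.dirac v) :=
    (integrable_dirac enorm_lt_top).smul_measure_nnreal
  calc ∫ Ω, (Ω : E) ∂antipodalMeasure a b u
      = a • (u : E) + b • ((-u : sphere (0 : E) r) : E) := by
        rw [antipodalMeasure,
          integral_add_measure (integrable_smul_dirac a u) (integrable_smul_dirac b (-u)),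
          integral_smul_nnreal_measure, integral_smul_nnreal_measure, integral_dirac,
          integral_dirac]
    _ = ((a : ℝ) - b) • (u : E) := by
        rw [coe_neg_sphere, NNReal.smul_def, NNReal.smul_def]
        module

end Moments

theorem realizable_iff_general {E : Type*} [NormedAddCommGroup E] [NormedSpace ℝ E]
    [CompleteSpace E] [Nontrivial E] [MeasurableSpace E] [OpensMeasurableSpace E] (p : ℝ) (q : E) :
    (∃ μ : Measure (sphere (0 : E) 1),
        IsFiniteMeasure μ ∧ μ.real Set.univ = p ∧ ∫ Ω, (Ω : E) ∂μ = q) ↔ ‖q‖ ≤ p := by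
  constructor
  · rintro ⟨μ, _, rfl, rfl⟩
    simpa only [one_mul] using norm_integral_sphere_le μ
  · intro hqp
    obtain ⟨u, hu⟩ := exists_sphere_norm_smul_eq q
    have hpos : 0 ≤ (p + ‖q‖) / 2 := by linarith [norm_nonneg q]
    have hneg : 0 ≤ (p - ‖q‖) / 2 := by linarith
    refine ⟨antipodalMeasure ((p + ‖q‖) / 2).toNNReal ((p - ‖q‖) / 2).toNNReal u,
      inferInstance, ?_, ?_⟩
    · rw [antipodalMeasure_real_univ, Real.coe_toNNReal _ hpos, Real.coe_toNNReal _ hneg]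
      ring
    · rw [integral_antipodalMeasure, Real.coe_toNNReal _ hpos, Real.coe_toNNReal _ hneg]
      convert hu using 2
      ring

/-- A pair `(p, q)` is realizable (there is a finite nonnegative Borel measure on the unit
sphere `S² ⊂ ℝ³` with zeroth moment `p` and first moment `q`) iff `p ≥ 0` and `‖q‖ ≤ p`. -/
theorem realizable_iff (p : ℝ) (q : EuclideanSpace ℝ (Fin 3)) :
    (∃ μ : Measure (Metric.sphere (0 : EuclideanSpace ℝ (Fin 3)) 1),
        IsFiniteMeasure μ ∧ (μ Set.univ).toReal = p ∧
        (∫ Ω, (Ω : EuclideanSpace ℝ (Fin 3)) ∂μ) = q) ↔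
      0 ≤ p ∧ ‖q‖ ≤ p :=
  (realizable_iff_general p q).trans (iff_and_self.2 (norm_nonneg q).trans)
end

section
/- Let μ be a finite nonnegative Borel measure on the unit sphere S² ⊂ ℝ³ with moments ψ⁰ = μ(S²), ψ¹ = ∫_{S²} Ω dμ(Ω), ψ² = ∫_{S²} Ω Ωᵀ dμ(Ω), and let ν ∈ ℝ³ be a unit vector and s ∈ {+1, −1}. Then the measure with density Ω ↦ 1 + s (ν·Ω) with respect to μ is a nonnegative measure whose zeroth moment equals ψ⁰ + s (ν·ψ¹) and whose first moment equals ψ¹ + s (ψ² ν); consequently the pair (ψ⁰ + s ν·ψ¹, ψ¹ + s ψ² ν) is realizable, i.e. ψ⁰ + s ν·ψ¹ ≥ 0 and ‖ψ¹ + s ψ² ν‖ ≤ ψ⁰ + s ν·ψ¹. -/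
open MeasureTheory
open scoped InnerProductSpace

/-!
Reweighting `μ` by a nonnegative density gives again a nonnegative measure, and the first moment of
any measure carried by the unit ball is bounded in norm by its mass. Applied to the density
`1 + ⟪w, Ω⟫`, which is nonnegative for `‖w‖ ≤ 1` by the Cauchy–Schwarz inequality, and whose moments
are linear in the moments of `μ`, this is the theorem with `w = s • ν`.
-/

/-- Realizability of a pair of moments: the conditions `0 ≤ p` and `‖q‖ ≤ p` that the mass `p` and
the first moment `q` of a measure on the unit sphere satisfy. -/
def IsRealizable {E : Type*} [Norm E] (p : ℝ) (q : E) : Prop :=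
  0 ≤ p ∧ ‖q‖ ≤ p

section Moments

variable {X E : Type*} [MeasurableSpace X] {μ : Measure X} [NormedAddCommGroup E]

theorem isRealizable_measureReal_integral [NormedSpace ℝ E] [IsFiniteMeasure μ] {f : X → E}
    (hf : ∀ᵐ x ∂μ, ‖f x‖ ≤ 1) :
    IsRealizable (μ.real Set.univ) (∫ x, f x ∂μ) :=
  ⟨measureReal_nonneg, by simpa only [one_mul] using norm_integral_le_of_norm_le_const hf⟩

theorem measureReal_univ_withDensity_ofReal {d : X → ℝ} (hd : AEStronglyMeasurable d μ)
    (hd_nonneg : 0 ≤ᵐ[μ] d) :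
    (μ.withDensity fun x => ENNReal.ofReal (d x)).real Set.univ = ∫ x, d x ∂μ := by
  rw [measureReal_def, withDensity_apply _ MeasurableSet.univ, Measure.restrict_univ,
    integral_eq_lintegral_of_nonneg_ae hd_nonneg hd]

theorem integral_withDensity_ofReal [NormedSpace ℝ E] {d : X → ℝ} (hd : AEMeasurable d μ)
    (hd_nonneg : 0 ≤ᵐ[μ] d) (f : X → E) :
    ∫ x, f x ∂(μ.withDensity fun x => ENNReal.ofReal (d x)) = ∫ x, d x • f x ∂μ := by
  rw [integral_withDensity_eq_integral_toReal_smul₀ hd.ennreal_ofReal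
    (.of_forall fun _ => ENNReal.ofReal_lt_top)]
  refine integral_congr_ae ?_
  filter_upwards [hd_nonneg] with x hx
  rw [ENNReal.toReal_ofReal hx]

variable [InnerProductSpace ℝ E]

theorem one_add_real_inner_nonneg {w v : E} (hw : ‖w‖ ≤ 1) (hv : ‖v‖ ≤ 1) :
    0 ≤ 1 + ⟪w, v⟫_ℝ := by
  have inner_ge : -(‖w‖ * ‖v‖) ≤ ⟪w, v⟫_ℝ := neg_le_of_abs_le (abs_real_inner_le_norm w v)
  have norm_mul_le : ‖w‖ * ‖v‖ ≤ 1 := mul_le_one₀ hw (norm_nonneg v) hv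
  linarith

theorem integral_one_add_inner [CompleteSpace E] [IsFiniteMeasure μ] {f : X → E}
    (hf : Integrable f μ) (w : E) :
    ∫ x, (1 + ⟪w, f x⟫_ℝ) ∂μ = μ.real Set.univ + ⟪w, ∫ x, f x ∂μ⟫_ℝ := by
  rw [integral_add (integrable_const 1) (hf.const_inner w), integral_inner hf, integral_const,
    smul_eq_mul, mul_one]

theorem integral_one_add_inner_smul {f : X → E} {w : E} (hf : Integrable f μ)
    (hwf : Integrable (fun x => ⟪f x, w⟫_ℝ • f x) μ) :
    ∫ x, (1 + ⟪w, f x⟫_ℝ) • f x ∂μ = (∫ x, f x ∂μ) + ∫ x, ⟪f x, w⟫_ℝ • f x ∂μ := by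
  simp only [add_smul, one_smul, real_inner_comm _ w]
  exact integral_add hf hwf

theorem moment_combination_realizable_general [CompleteSpace E] [IsFiniteMeasure μ] {f : X → E}
    (hf : AEStronglyMeasurable f μ) (hf_le : ∀ x, ‖f x‖ ≤ 1) {w : E} (hw : ‖w‖ ≤ 1) :
    (∀ x, 0 ≤ 1 + ⟪w, f x⟫_ℝ) ∧
    (μ.withDensity fun x => ENNReal.ofReal (1 + ⟪w, f x⟫_ℝ)).real Set.univ
      = μ.real Set.univ + ⟪w, ∫ x, f x ∂μ⟫_ℝ ∧
    ∫ x, f x ∂(μ.withDensity fun x => ENNReal.ofReal (1 + ⟪w, f x⟫_ℝ))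
      = (∫ x, f x ∂μ) + ∫ x, ⟪f x, w⟫_ℝ • f x ∂μ ∧
    IsRealizable (μ.real Set.univ + ⟪w, ∫ x, f x ∂μ⟫_ℝ)
      ((∫ x, f x ∂μ) + ∫ x, ⟪f x, w⟫_ℝ • f x ∂μ) := by
  have f_integrable : Integrable f μ := .of_bound hf 1 (.of_forall hf_le)
  have inner_smul_integrable : Integrable (fun x => ⟪f x, w⟫_ℝ • f x) μ :=
    (f_integrable.inner_const w).smul_bdd 1 hf (.of_forall hf_le)
  have density_integrable : Integrable (fun x => 1 + ⟪w, f x⟫_ℝ) μ :=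
    (integrable_const 1).add (f_integrable.const_inner w)
  have density_nonneg (x : X) : 0 ≤ 1 + ⟪w, f x⟫_ℝ := one_add_real_inner_nonneg hw (hf_le x)
  have zeroth_moment := (measureReal_univ_withDensity_ofReal density_integrable.1
    (.of_forall density_nonneg)).trans (integral_one_add_inner f_integrable w)
  have first_moment := (integral_withDensity_ofReal density_integrable.aemeasurable
    (.of_forall density_nonneg) f).trans
      (integral_one_add_inner_smul f_integrable inner_smul_integrable)
  have : IsFiniteMeasure (μ.withDensity fun x => ENNReal.ofReal (1 + ⟪w, f x⟫_ℝ)) :=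
    isFiniteMeasure_withDensity_ofReal density_integrable.2
  refine ⟨density_nonneg, zeroth_moment, first_moment, ?_⟩
  rw [← zeroth_moment, ← first_moment]
  exact isRealizable_measureReal_integral (.of_forall hf_le)

end Moments

/-- Lemma 3.1: given a finite nonnegative measure `μ` on `S²` with moments
`ψ⁰ = μ(S²)`, `ψ¹ = ∫ Ω dμ`, `ψ²ν = ∫ ⟪Ω, ν⟫ Ω dμ` (the second-moment matrix applied
to `ν`), a unit vector `ν` and a sign `s = ±1`, the density `Ω ↦ 1 + s ⟪ν, Ω⟫` w.r.t. `μ`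
is nonnegative, has zeroth moment `ψ⁰ + s ⟪ν, ψ¹⟫` and first moment `ψ¹ + s • (ψ² ν)`;
consequently `(ψ⁰ + s ⟪ν, ψ¹⟫, ψ¹ + s • ψ² ν)` is realizable. -/
theorem moment_combination_realizable
    (μ : Measure (Metric.sphere (0 : EuclideanSpace ℝ (Fin 3)) 1)) [IsFiniteMeasure μ]
    (ν : EuclideanSpace ℝ (Fin 3)) (hν : ‖ν‖ = 1) (s : ℝ) (hs : s = 1 ∨ s = -1) :
    (∀ Ω : Metric.sphere (0 : EuclideanSpace ℝ (Fin 3)) 1,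
        0 ≤ 1 + s * ⟪ν, (Ω : EuclideanSpace ℝ (Fin 3))⟫_ℝ) ∧
    ((μ.withDensity fun Ω =>
        ENNReal.ofReal (1 + s * ⟪ν, (Ω : EuclideanSpace ℝ (Fin 3))⟫_ℝ)) Set.univ).toReal
      = (μ Set.univ).toReal + s * ⟪ν, ∫ Ω, (Ω : EuclideanSpace ℝ (Fin 3)) ∂μ⟫_ℝ ∧
    (∫ Ω, (Ω : EuclideanSpace ℝ (Fin 3))
        ∂(μ.withDensity fun Ω =>
          ENNReal.ofReal (1 + s * ⟪ν, (Ω : EuclideanSpace ℝ (Fin 3))⟫_ℝ)))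
      = (∫ Ω, (Ω : EuclideanSpace ℝ (Fin 3)) ∂μ)
        + s • (∫ Ω, ⟪(Ω : EuclideanSpace ℝ (Fin 3)), ν⟫_ℝ • (Ω : EuclideanSpace ℝ (Fin 3)) ∂μ) ∧
    0 ≤ (μ Set.univ).toReal + s * ⟪ν, ∫ Ω, (Ω : EuclideanSpace ℝ (Fin 3)) ∂μ⟫_ℝ ∧
    ‖(∫ Ω, (Ω : EuclideanSpace ℝ (Fin 3)) ∂μ)
        + s • (∫ Ω, ⟪(Ω : EuclideanSpace ℝ (Fin 3)), ν⟫_ℝ • (Ω : EuclideanSpace ℝ (Fin 3)) ∂μ)‖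
      ≤ (μ Set.univ).toReal + s * ⟪ν, ∫ Ω, (Ω : EuclideanSpace ℝ (Fin 3)) ∂μ⟫_ℝ := by
  have hw : ‖s • ν‖ ≤ 1 := by rcases hs with rfl | rfl <;> simp [hν]
  simpa only [IsRealizable, measureReal_def, real_inner_smul_left, real_inner_smul_right, mul_smul,
    integral_smul] using moment_combination_realizable_general (μ := μ)
      continuous_subtype_val.aestronglyMeasurable (fun Ω => (norm_eq_of_mem_sphere Ω).le) hw
end

section
/- For every f ∈ [0, 1], the Eddington factor satisfies 1/3 ≤ χ(f) ≤ 1 and f² ≤ χ(f). -/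
/-- The Eddington factor of the M₁ model. -/
noncomputable def eddingtonChi (f : ℝ) : ℝ :=
  (3 + 4 * f ^ 2) / (5 + 2 * Real.sqrt (4 - 3 * f ^ 2))

/-!
With `s = √(4 - 3 * f ^ 2)`, the numerator of `χ` factors as `(5 - 2 * s) * (5 + 2 * s) / 3`, so
`χ = (5 - 2 * s) / 3` is affine in `s`. The bounds `1 / 3 ≤ χ ≤ 1` then say `1 ≤ s ≤ 2`, and
`χ - f ^ 2` is the perfect square `(s - 1) ^ 2 / 3`.
-/

section

variable {f : ℝ}

theorem eddingtonChi_eq_sub_sqrt_div (hf : 3 * f ^ 2 ≤ 4) :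
    eddingtonChi f = (5 - 2 * √(4 - 3 * f ^ 2)) / 3 := by
  have sq_sqrt : √(4 - 3 * f ^ 2) ^ 2 = 4 - 3 * f ^ 2 := Real.sq_sqrt (sub_nonneg.2 hf)
  have denom_ne_zero : 5 + 2 * √(4 - 3 * f ^ 2) ≠ 0 := by positivity
  rw [eddingtonChi, div_eq_div_iff denom_ne_zero three_ne_zero]
  linear_combination 4 * sq_sqrt

theorem one_third_le_eddingtonChi (hf : 3 * f ^ 2 ≤ 4) : 1 / 3 ≤ eddingtonChi f := by
  have sqrt_le_two : √(4 - 3 * f ^ 2) ≤ 2 :=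
    Real.sqrt_le_iff.2 ⟨zero_le_two, by linarith [sq_nonneg f]⟩
  rw [eddingtonChi_eq_sub_sqrt_div hf]
  linarith

theorem eddingtonChi_le_one_iff (hf : 3 * f ^ 2 ≤ 4) : eddingtonChi f ≤ 1 ↔ |f| ≤ 1 := by
  calc eddingtonChi f ≤ 1
    _ ↔ 1 ≤ √(4 - 3 * f ^ 2) := by
      rw [eddingtonChi_eq_sub_sqrt_div hf]
      constructor <;> intro h <;> linarith
    _ ↔ f ^ 2 ≤ 1 := by
      rw [Real.one_le_sqrt]
      constructor <;> intro h <;> linarith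
    _ ↔ |f| ≤ 1 := sq_le_one_iff_abs_le_one f

theorem eddingtonChi_sub_sq (hf : 3 * f ^ 2 ≤ 4) :
    eddingtonChi f - f ^ 2 = (√(4 - 3 * f ^ 2) - 1) ^ 2 / 3 := by
  have sq_sqrt : √(4 - 3 * f ^ 2) ^ 2 = 4 - 3 * f ^ 2 := Real.sq_sqrt (sub_nonneg.2 hf)
  rw [eddingtonChi_eq_sub_sqrt_div hf]
  linear_combination -sq_sqrt / 3

theorem sq_le_eddingtonChi (hf : 3 * f ^ 2 ≤ 4) : f ^ 2 ≤ eddingtonChi f := by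
  rw [← sub_nonneg, eddingtonChi_sub_sq hf]
  positivity

theorem eddingtonChi_bounds_general (hf : |f| ≤ 1) :
    1 / 3 ≤ eddingtonChi f ∧ eddingtonChi f ≤ 1 ∧ f ^ 2 ≤ eddingtonChi f := by
  have three_sq_le : 3 * f ^ 2 ≤ 4 := by linarith [(sq_le_one_iff_abs_le_one f).2 hf]
  exact ⟨one_third_le_eddingtonChi three_sq_le, (eddingtonChi_le_one_iff three_sq_le).2 hf,
    sq_le_eddingtonChi three_sq_le⟩

end

/-- For every `f ∈ [0, 1]`, the Eddington factor satisfies `1/3 ≤ χ(f) ≤ 1` and `f² ≤ χ(f)`. -/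
theorem eddingtonChi_bounds (f : ℝ) (hf : f ∈ Set.Icc (0 : ℝ) 1) :
    1 / 3 ≤ eddingtonChi f ∧ eddingtonChi f ≤ 1 ∧ f ^ 2 ≤ eddingtonChi f :=
  eddingtonChi_bounds_general ((abs_of_nonneg hf.1).trans_le hf.2)
end

section
/- The Eddington factor χ is strictly increasing on [0, 1], with χ(0) = 1/3 and χ(1) = 1. -/
theorem strictMonoOn_div_of_antitoneOn {α G₀ : Type*} [Preorder α] [GroupWithZero G₀]
    [PartialOrder G₀] [PosMulReflectLT G₀] [MulPosReflectLT G₀] {u v : α → G₀} {s : Set α}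
    (hu : StrictMonoOn u s) (hv : AntitoneOn v s)
    (hu_nonneg : ∀ x ∈ s, 0 ≤ u x) (hv_pos : ∀ x ∈ s, 0 < v x) :
    StrictMonoOn (fun x ↦ u x / v x) s := fun _ hx y hy hxy ↦
  div_lt_div₀ (hu hx hy hxy) (hv hx hy hxy.le) (hu_nonneg y hy) (hv_pos y hy)

theorem strictMonoOn_const_add_const_mul_pow {R : Type*} [Semiring R] [PartialOrder R]
    [IsStrictOrderedRing R] {a : R} (ha : 0 < a) (b : R) {n : ℕ} (hn : n ≠ 0) :
    StrictMonoOn (fun x ↦ b + a * x ^ n) (Set.Ici 0) := fun _ hx _ hy hxy ↦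
  add_lt_add_right (mul_lt_mul_of_pos_left (pow_left_strictMonoOn₀ hn hx hy hxy) ha) b

theorem antitoneOn_sqrt_const_sub_const_mul_pow {a : ℝ} (ha : 0 ≤ a) (b : ℝ) (n : ℕ) :
    AntitoneOn (fun x : ℝ ↦ √(b - a * x ^ n)) (Set.Ici 0) := fun _ hx _ _ hxy ↦
  Real.sqrt_le_sqrt <| sub_le_sub_left
    (mul_le_mul_of_nonneg_left (pow_le_pow_left₀ hx hxy n) ha) b

theorem eddingtonChi_zero : eddingtonChi 0 = 1 / 3 := by
  have sqrt_four : √(4 : ℝ) = 2 :=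
    (Real.sqrt_eq_iff_mul_self_eq_of_pos two_pos).2 (by norm_num)
  norm_num [eddingtonChi, sqrt_four]

theorem eddingtonChi_one : eddingtonChi 1 = 1 := by
  norm_num [eddingtonChi]

/-- The radicand `4 - 3 * f ^ 2` vanishes at `f = √(4 / 3)`; for larger `f`, `Real.sqrt` takes
its junk value `0`. -/
theorem eddingtonChi_strictMonoOn_general :
    StrictMonoOn eddingtonChi (Set.Icc 0 √(4 / 3)) ∧
      eddingtonChi 0 = 1 / 3 ∧ eddingtonChi 1 = 1 := by
  refine ⟨?_, eddingtonChi_zero, eddingtonChi_one⟩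
  have num_strictMonoOn : StrictMonoOn (fun f : ℝ ↦ 3 + 4 * f ^ 2) (Set.Ici 0) :=
    strictMonoOn_const_add_const_mul_pow four_pos 3 two_ne_zero
  have den_antitoneOn : AntitoneOn (fun f : ℝ ↦ 5 + 2 * √(4 - 3 * f ^ 2)) (Set.Ici 0) :=
    fun _ hx _ hy hxy ↦ add_le_add_right (mul_le_mul_of_nonneg_left
      (antitoneOn_sqrt_const_sub_const_mul_pow zero_le_three 4 2 hx hy hxy) zero_le_two) 5
  exact strictMonoOn_div_of_antitoneOn (num_strictMonoOn.mono Set.Icc_subset_Ici_self)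
    (den_antitoneOn.mono Set.Icc_subset_Ici_self)
    (fun _ _ ↦ by positivity) (fun _ _ ↦ by positivity)

/-- The Eddington factor `χ` is strictly increasing on `[0, 1]`, with `χ(0) = 1/3` and
`χ(1) = 1`. -/
theorem eddingtonChi_strictMonoOn :
    StrictMonoOn eddingtonChi (Set.Icc (0 : ℝ) 1) ∧
      eddingtonChi 0 = 1 / 3 ∧ eddingtonChi 1 = 1 :=
  eddingtonChi_strictMonoOn_general.imp_left fun hmono ↦
    hmono.mono (Set.Icc_subset_Icc_right (Real.one_le_sqrt.2 (by norm_num)))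
end

section
/- Let (p, q) ∈ ℝ × ℝ² and (r, s) ∈ ℝ × ℝ² both be realizable, let σ_a ≥ 0, σ_s ≥ 0, and Δt ≥ 0 satisfy Δt(σ_a + σ_s) ≤ 1. Then the forward-Euler updated pair ((1 − Δt σ_a) p + Δt r, (1 − Δt(σ_a + σ_s)) q + Δt s) is realizable. -/
section RealizableCone

variable {E : Type*} [SeminormedAddCommGroup E] [NormedSpace ℝ E]

variable (E) in
/-- The realizable moment pairs `(p, q)` of the `M₁` model, as a pointed convex cone in `ℝ × E`:
`p` is the zeroth moment (a scalar density) and `q` the first moment (a flux). The flux space `E`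
is an arbitrary seminormed space; the model in the plane has `E = EuclideanSpace ℝ (Fin 2)`. -/
def realizableCone : PointedCone ℝ (ℝ × E) where
  carrier := {x | 0 ≤ x.1 ∧ ‖x.2‖ ≤ x.1}
  zero_mem' := by simp
  add_mem' hx hy := ⟨add_nonneg hx.1 hy.1, norm_add_le_of_le hx.2 hy.2⟩
  smul_mem' c x hx := by
    refine ⟨mul_nonneg c.2 hx.1, ?_⟩
    calc ‖(c : ℝ) • x.2‖ = c * ‖x.2‖ := norm_smul_of_nonneg c.2 x.2
      _ ≤ c * x.1 := mul_le_mul_of_nonneg_left hx.2 c.2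

theorem mem_realizableCone {p : ℝ} {q : E} :
    (p, q) ∈ realizableCone E ↔ 0 ≤ p ∧ ‖q‖ ≤ p :=
  Iff.rfl

theorem isotropic_mem_realizableCone {p : ℝ} (hp : 0 ≤ p) : (p, (0 : E)) ∈ realizableCone E :=
  mem_realizableCone.2 ⟨hp, by rwa [norm_zero]⟩

end RealizableCone

-- Over one time step a fraction `Δt * σs` of the particles is scattered isotropically: it keeps its
-- density but loses its flux, hence the summand `(p, 0)`.
theorem forwardEuler_eq_smul_add_smul_add_smul {R M : Type*} [CommRing R] [AddCommGroup M]
    [Module R M] (p r : R) (q s : M) (σa σs Δt : R) :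
    ((1 - Δt * σa) * p + Δt * r, (1 - Δt * (σa + σs)) • q + Δt • s) =
      (1 - Δt * (σa + σs)) • (p, q) + (Δt * σs) • (p, (0 : M)) + Δt • (r, s) := by
  ext
  · simp only [Prod.fst_add, Prod.smul_fst, smul_eq_mul]
    ring
  · simp

theorem forwardEuler_source_realizable_general {E : Type*} [SeminormedAddCommGroup E]
    [NormedSpace ℝ E] {p r : ℝ} {q s : E} {σa σs Δt : ℝ}
    (hpq : (p, q) ∈ realizableCone E) (hrs : (r, s) ∈ realizableCone E)
    (hσs : 0 ≤ σs) (ht : 0 ≤ Δt) (hcfl : Δt * (σa + σs) ≤ 1) :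
    ((1 - Δt * σa) * p + Δt * r, (1 - Δt * (σa + σs)) • q + Δt • s) ∈ realizableCone E := by
  have uncollided := (realizableCone E).smul_mem (sub_nonneg.2 hcfl) hpq
  have scattered := (realizableCone E).smul_mem (mul_nonneg ht hσs)
    (isotropic_mem_realizableCone (mem_realizableCone.1 hpq).1)
  have emitted := (realizableCone E).smul_mem ht hrs
  rw [forwardEuler_eq_smul_add_smul_add_smul]
  exact add_mem (add_mem uncollided scattered) emitted

/-- Forward-Euler update of realizable moments with absorption `σ_a`, scattering `σ_s` and a
realizable source `(r, s)` stays realizable under the time-step restriction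
`Δt(σ_a + σ_s) ≤ 1`. -/
theorem forwardEuler_source_realizable (p r : ℝ) (q s : EuclideanSpace ℝ (Fin 2))
    (σa σs Δt : ℝ)
    (hpq : 0 ≤ p ∧ ‖q‖ ≤ p) (hrs : 0 ≤ r ∧ ‖s‖ ≤ r)
    (ha : 0 ≤ σa) (hσs : 0 ≤ σs) (ht : 0 ≤ Δt) (hcfl : Δt * (σa + σs) ≤ 1) :
    0 ≤ (1 - Δt * σa) * p + Δt * r ∧
      ‖(1 - Δt * (σa + σs)) • q + Δt • s‖ ≤ (1 - Δt * σa) * p + Δt * r :=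
  mem_realizableCone.1 <| forwardEuler_source_realizable_general
    (mem_realizableCone.2 hpq) (mem_realizableCone.2 hrs) hσs ht hcfl
end
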